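/- The total number of models on the domain Fin n equals ∑_{k : Σk = n} C(n;k) · ∏_{0 ≤ i ≤ j < I} n_{ij}^{k(i,j)}. (This is the closed-form formula for first-order model counting of a pure universal FO² formula on a domain of size n.) -/

import Mathlib

/-!
A model is a map `f` together with an independent choice, for every pair `a < b`, of one of the
`nty N (f a) (f b)` compatible pair-types, so there are `∑ f, ∏_{a < b} nty N (f a) (f b)` models
(`card_pairModel`). The existence of `s` makes `nty N` symmetric, so the factor of `a < b` depends
only on the unordered pair `{f a, f b}`, which is encoded as `(min (f a) (f b), max (f a) (f b))`.
Exactly `kij (fiberVec f) i j` pairs `a < b` have the code `(i, j)` with `i ≤ j`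
(`card_pairs_eq_kij`), so the product over `a < b` depends on `f` only through its fiber vector.
Finally, `Nat.multinomial univ k` maps have the fiber vector `k` (`card_fiberVec_eq`), as one sees
by comparing the coefficients of `∏ i, X i ^ k i` in the expansion of `(∑ i, X i) ^ n` as a sum over
maps `Fin n → Fin I` with those given by the multinomial theorem.
-/

/-- The set of ordered pairs `a < b` of domain elements `Fin n`. -/
abbrev IdxPair (n : ℕ) := {p : Fin n × Fin n // p.1 < p.2}

/-- A model on the domain `Fin n`: a 1-type assignment `f : Fin n → Fin I` together with a
pair-type assignment `g` on the pairs `a < b`, compatible with `N`. -/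
structure PairModel (n I : ℕ) (V : Type) (N : Fin I → Fin I → V → Bool) where
  f : Fin n → Fin I
  g : IdxPair n → V
  valid : ∀ p : IdxPair n, N (f p.1.1) (f p.1.2) (g p) = true

/-- `n_{ij}`: the number of pair-types `v ∈ V` compatible with the 1-types `i, j`. -/
noncomputable def nty {I : ℕ} {V : Type} (N : Fin I → Fin I → V → Bool) (i j : Fin I) : ℕ :=
  Nat.card {v : V // N i j v = true}

/-- The fiber vector of `f : Fin n → Fin I`: `k_i = |f⁻¹(i)|`. -/
noncomputable def fiberVec {n I : ℕ} (f : Fin n → Fin I) : Fin I → ℕ :=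
  fun i => Nat.card {a : Fin n // f a = i}

/-- `k(i,j) = k_i (k_i − 1)/2` if `i = j` and `k_i · k_j` otherwise. -/
def kij {I : ℕ} (k : Fin I → ℕ) (i j : Fin I) : ℕ :=
  if i = j then k i * (k i - 1) / 2 else k i * k j

theorem fiberVec_apply {n I : ℕ} (f : Fin n → Fin I) (i : Fin I) :
    fiberVec f i = (Finset.univ.filter (fun a => f a = i)).card := by
  rw [fiberVec, Nat.card_eq_fintype_card, Fintype.card_subtype]

theorem sum_fiberVec {n I : ℕ} (f : Fin n → Fin I) : ∑ i, fiberVec f i = n := by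
  simp only [fiberVec_apply]
  rw [← Finset.card_eq_sum_card_fiberwise (fun _ _ => Finset.mem_coe.2 (Finset.mem_univ _))]
  simp

theorem nty_comm {I : ℕ} {V : Type} (s : V → V) (hs : Function.Involutive s)
    (N : Fin I → Fin I → V → Bool) (hN : ∀ i j v, N i j v = N j i (s v)) (i j : Fin I) :
    nty N i j = nty N j i :=
  Nat.card_congr (hs.toPerm.subtypeEquiv fun v => by
    rw [hN i j v, Function.Involutive.coe_toPerm])

/-- The number of maps `Fin n → Fin I` with fiber vector `k` is a multinomial coefficient: both
are the coefficient of `∏ i, X i ^ k i` in `(∑ i, X i) ^ n`. -/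
theorem card_fiberVec_eq {n I : ℕ} (k : Fin I → ℕ) (hk : ∑ i, k i = n) :
    (Finset.univ.filter (fun f : Fin n → Fin I => fiberVec f = k)).card =
      Nat.multinomial Finset.univ k := by
  classical
  have h := MvPolynomial.coeff_sum_X_pow_of_fintype (R := ℕ) (Finsupp.equivFunOnFinite.symm k) n
  rw [if_pos (by simpa [Finsupp.sum_fintype] using hk),
    Finsupp.multinomial_eq_of_support_subset (Finset.subset_univ _)] at h
  have hexp : (∑ i, MvPolynomial.X i : MvPolynomial (Fin I) ℕ) ^ n =
      ∑ f : Fin n → Fin I,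
        MvPolynomial.monomial (Finsupp.equivFunOnFinite.symm (fiberVec f)) 1 := by
    rw [← Fin.prod_const, Finset.prod_univ_sum, Fintype.piFinset_univ]
    refine Finset.sum_congr rfl fun f _ => ?_
    rw [← Finset.prod_fiberwise' Finset.univ f, MvPolynomial.monomial_eq]
    simp [Finsupp.prod_fintype, fiberVec_apply]
  rw [hexp, MvPolynomial.coeff_sum] at h
  simp only [MvPolynomial.coeff_monomial, Equiv.apply_eq_iff_eq] at h
  simpa using h

/-- A model consists of a map `f` and one compatible pair-type for each pair `a < b`. -/
def pairModelEquiv {n I : ℕ} {V : Type} (N : Fin I → Fin I → V → Bool) :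
    PairModel n I V N ≃
      Σ f : Fin n → Fin I, ∀ p : IdxPair n, {v : V // N (f p.1.1) (f p.1.2) v = true} where
  toFun m := ⟨m.f, fun p => ⟨m.g p, m.valid p⟩⟩
  invFun x := ⟨x.1, fun p => (x.2 p).1, fun p => (x.2 p).2⟩
  left_inv _ := rfl
  right_inv _ := rfl

theorem card_pairModel {n I : ℕ} {V : Type} [Fintype V] (N : Fin I → Fin I → V → Bool) :
    Nat.card (PairModel n I V N) =
      ∑ f : Fin n → Fin I, ∏ p ∈ Finset.univ.filter (fun p : Fin n × Fin n => p.1 < p.2),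
        nty N (f p.1) (f p.2) := by
  rw [Nat.card_congr (pairModelEquiv N), Nat.card_sigma]
  refine Finset.sum_congr rfl fun f _ => ?_
  rw [Nat.card_pi]
  exact (Finset.prod_subtype _ (by simp) (fun p : Fin n × Fin n => nty N (f p.1) (f p.2))).symm

/-- Every unordered pair of distinct elements of `t` is listed once in each of its two orders in
`t.offDiag`. -/
theorem card_lt_pairs {n : ℕ} (t : Finset (Fin n)) :
    ((t ×ˢ t).filter (fun p => p.1 < p.2)).card = t.card * (t.card - 1) / 2 := by
  have hswap : ((t ×ˢ t).filter (fun p => p.2 < p.1)).card =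
      ((t ×ˢ t).filter (fun p => p.1 < p.2)).card :=
    Finset.card_bij' (fun p _ => p.swap) (fun p _ => p.swap)
      (by simp +contextual) (by simp +contextual) (by simp) (by simp)
  have hunion : t.offDiag = (t ×ˢ t).filter (fun p => p.1 < p.2) ∪
      (t ×ˢ t).filter (fun p => p.2 < p.1) := by
    ext p
    simp only [Finset.mem_offDiag, Finset.mem_union, Finset.mem_filter, Finset.mem_product,
      ← and_or_left, and_assoc, ne_iff_lt_or_gt]
  have hdisj : Disjoint ((t ×ˢ t).filter (fun p => p.1 < p.2))
      ((t ×ˢ t).filter (fun p => p.2 < p.1)) :=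
    Finset.disjoint_filter.2 fun _ _ h => h.asymm
  have h := Finset.offDiag_card t
  rw [hunion, Finset.card_union_of_disjoint hdisj, hswap] at h
  rw [Nat.mul_sub_one]
  omega

/-- The number of pairs `a < b` with `{f a, f b} = {i, j}`, for `i ≤ j`. -/
theorem card_pairs_eq_kij {n I : ℕ} (f : Fin n → Fin I) {i j : Fin I} (hij : i ≤ j) :
    ((Finset.univ.filter (fun p : Fin n × Fin n => p.1 < p.2)).filter
      (fun p => (min (f p.1) (f p.2), max (f p.1) (f p.2)) = (i, j))).card =
      kij (fiberVec f) i j := by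
  unfold kij
  split_ifs with h
  · subst h
    rw [fiberVec_apply, ← card_lt_pairs]
    congr 1
    ext p
    simp only [Finset.mem_filter, Finset.mem_univ, true_and, Prod.mk.injEq, Finset.mem_product]
    grind
  · rw [fiberVec_apply, fiberVec_apply, ← Finset.card_product]
    -- Reorder `(a, b)` so that `f` sends its entries to `i` and `j`, respectively.
    refine Finset.card_bij' (fun p _ => if f p.1 = i then p else p.swap)
      (fun q _ => if q.1 < q.2 then q else q.swap) ?_ ?_ ?_ ?_
    all_goals
      rintro ⟨a, b⟩ hab
      simp only [Finset.mem_filter, Finset.mem_univ, true_and, Prod.mk.injEq,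
        Finset.mem_product] at hab ⊢
      grind

/-- Grouping the pairs `a < b` by the unordered pair `{f a, f b}`. -/
theorem prod_pairs_eq {n I : ℕ} (f : Fin n → Fin I) (c : Fin I → Fin I → ℕ)
    (hc : ∀ i j, c i j = c j i) :
    ∏ p ∈ Finset.univ.filter (fun p : Fin n × Fin n => p.1 < p.2), c (f p.1) (f p.2) =
      ∏ q ∈ Finset.univ.filter (fun q : Fin I × Fin I => q.1 ≤ q.2),
        c q.1 q.2 ^ kij (fiberVec f) q.1 q.2 := by
  have hmm : ∀ i j, c i j = c (min i j) (max i j) := by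
    intro i j
    rcases le_total i j with h | h
    · rw [min_eq_left h, max_eq_right h]
    · rw [min_eq_right h, max_eq_left h, hc]
  calc _ = ∏ p ∈ Finset.univ.filter (fun p : Fin n × Fin n => p.1 < p.2),
        (fun q : Fin I × Fin I => c q.1 q.2) (min (f p.1) (f p.2), max (f p.1) (f p.2)) :=
        Finset.prod_congr rfl fun p _ => hmm _ _
    _ = _ := by
      rw [← Finset.prod_fiberwise_of_maps_to'
        (g := fun p : Fin n × Fin n => (min (f p.1) (f p.2), max (f p.1) (f p.2)))
        (t := Finset.univ.filter (fun q : Fin I × Fin I => q.1 ≤ q.2)) (by simp)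
        (fun q : Fin I × Fin I => c q.1 q.2)]
      refine Finset.prod_congr rfl fun q hq => ?_
      rw [Finset.prod_const, card_pairs_eq_kij f (Finset.mem_filter.1 hq).2]

/-- The total number of models on the domain `Fin n` equals
`∑_{k : Σk = n} C(n;k) · ∏_{0 ≤ i ≤ j < I} n_{ij}^{k(i,j)}` — the closed-form formula for
first-order model counting of a pure universal FO² formula on a domain of size `n`. -/
theorem stmt4 (n I : ℕ) (V : Type) [Fintype V] [DecidableEq V]
    (s : V → V) (hs : Function.Involutive s)
    (N : Fin I → Fin I → V → Bool) (hN : ∀ i j v, N i j v = N j i (s v)) :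
    Nat.card (PairModel n I V N) =
      ∑ k ∈ Finset.Nat.antidiagonalTuple I n,
        Nat.multinomial Finset.univ k *
          ∏ p ∈ Finset.univ.filter (fun p : Fin I × Fin I => p.1 ≤ p.2),
            nty N p.1 p.2 ^ kij k p.1 p.2 := by
  rw [card_pairModel]
  simp only [prod_pairs_eq _ (nty N) (nty_comm s hs N hN)]
  rw [← Finset.sum_fiberwise_of_maps_to' (g := fiberVec)
    (t := Finset.Nat.antidiagonalTuple I n)
    (fun f _ => Finset.Nat.mem_antidiagonalTuple.2 (sum_fiberVec f))
    (fun k => ∏ p ∈ Finset.univ.filter (fun p : Fin I × Fin I => p.1 ≤ p.2),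
      nty N p.1 p.2 ^ kij k p.1 p.2)]
  refine Finset.sum_congr rfl fun k hk => ?_
  rw [Finset.sum_const, smul_eq_mul, card_fiberVec_eq k (Finset.Nat.mem_antidiagonalTuple.1 hk)]
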